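/- Let S and A be finite nonempty types, P : S → A → PMF S a transition kernel, γ a real number with 0 ≤ γ < 1, and r : S → A → ℝ a reward function. For a policy π : S → PMF A let Q^π denote the unique solution of Q^π(s,a) = r(s,a) + γ · ∑_{s'} (P s a) s' · ∑_{a'} (π s') a' · Q^π(s',a'), and let V^π(s) = ∑_a (π s) a · Q^π(s,a). Suppose policies π and π' satisfy ∑_a (π' s) a · Q^π(s,a) ≥ V^π(s) for every state s, with strict inequality at some state s₀. Then V^{π'}(s) ≥ V^π(s) for all s and V^{π'}(s₀) > V^π(s₀). -/

import Mathlib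

open scoped BigOperators

/-- The real masses of a probability mass function on a finite type sum to one. -/
lemma PMF.sum_toReal_eq_one {α : Type*} [Fintype α] (p : PMF α) :
    ∑ x, (p x).toReal = 1 := by
  have h := p.tsum_coe
  rw [tsum_fintype] at h
  rw [← ENNReal.toReal_sum fun x _ => p.apply_ne_top x, h, ENNReal.toReal_one]

/-- A lower bound for a function is a lower bound for its mean. -/
lemma PMF.le_sum_toReal_mul {α : Type*} [Fintype α] (p : PMF α) {f : α → ℝ} {m : ℝ}
    (hm : ∀ x, m ≤ f x) : m ≤ ∑ x, (p x).toReal * f x := by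
  calc m = ∑ x, (p x).toReal * m := by rw [← Finset.sum_mul, p.sum_toReal_eq_one, one_mul]
    _ ≤ _ := by gcongr with x; exact hm x

/-- Strict policy improvement: if `π'` improves on `V^π` at every state, with a
strict improvement at some state `s₀`, then `V^{π'} ≥ V^π` everywhere and
`V^{π'}(s₀) > V^π(s₀)`, where `V^π(s) = ∑_a π(a|s) Q^π(s,a)`. -/
theorem strict_policy_improvement {S A : Type*}
    [Fintype S] [Nonempty S] [Fintype A] [Nonempty A]
    (P : S → A → PMF S) (γ : ℝ) (hγ0 : 0 ≤ γ) (hγ1 : γ < 1)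
    (r : S → A → ℝ) (π π' : S → PMF A)
    (Qπ : S × A → ℝ)
    (hQπ : ∀ (s : S) (a : A),
      Qπ (s, a) = r s a + γ * ∑ s' : S, ((P s a) s').toReal *
        ∑ a' : A, ((π s') a').toReal * Qπ (s', a'))
    (Qπ' : S × A → ℝ)
    (hQπ' : ∀ (s : S) (a : A),
      Qπ' (s, a) = r s a + γ * ∑ s' : S, ((P s a) s').toReal *
        ∑ a' : A, ((π' s') a').toReal * Qπ' (s', a'))
    (himp : ∀ s : S,
      ∑ a : A, ((π' s) a).toReal * Qπ (s, a) ≥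
        ∑ a : A, ((π s) a).toReal * Qπ (s, a))
    (s₀ : S)
    (hstrict : ∑ a : A, ((π' s₀) a).toReal * Qπ (s₀, a) >
        ∑ a : A, ((π s₀) a).toReal * Qπ (s₀, a)) :
    (∀ s : S, ∑ a : A, ((π' s) a).toReal * Qπ' (s, a) ≥
        ∑ a : A, ((π s) a).toReal * Qπ (s, a)) ∧
    ∑ a : A, ((π' s₀) a).toReal * Qπ' (s₀, a) >
        ∑ a : A, ((π s₀) a).toReal * Qπ (s₀, a) := by
  set V : S → ℝ := fun s => ∑ a, ((π s) a).toReal * Qπ (s, a) with hV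
  set V' : S → ℝ := fun s => ∑ a, ((π' s) a).toReal * Qπ' (s, a) with hV'
  have gap : ∀ m : ℝ, (∀ s, m ≤ V' s - V s) → ∀ s,
      γ * m + (∑ a, ((π' s) a).toReal * Qπ (s, a) - V s) ≤ V' s - V s := by
    intro m hm s
    have hQ : ∀ a, γ * m ≤ Qπ' (s, a) - Qπ (s, a) := fun a => by
      have hdiff : Qπ' (s, a) - Qπ (s, a) =
          γ * ∑ s', ((P s a) s').toReal * (V' s' - V s') := by
        rw [hQπ', hQπ]
        simp only [mul_sub, Finset.sum_sub_distrib, hV, hV']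
        ring
      rw [hdiff]
      exact mul_le_mul_of_nonneg_left ((P s a).le_sum_toReal_mul hm) hγ0
    have hmean := (π' s).le_sum_toReal_mul hQ
    simp only [mul_sub, Finset.sum_sub_distrib] at hmean
    change γ * m ≤ V' s - _ at hmean
    linarith
  obtain ⟨t, ht⟩ := Finite.exists_min fun s => V' s - V s
  have hmin : 0 ≤ V' t - V t := by
    have hgap := gap _ ht t
    have hadv : V t ≤ ∑ a, ((π' t) a).toReal * Qπ (t, a) := himp t
    nlinarith
  refine ⟨fun s => sub_nonneg.mp (hmin.trans (ht s)), ?_⟩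
  have hgap := gap _ ht s₀
  have hdiscounted := mul_nonneg hγ0 hmin
  change V s₀ < _ at hstrict
  change V s₀ < V' s₀
  linarith
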